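/- arXiv:1004.2605 — 11 statements merged into one kernel-verified Lean document; each statement's English description precedes it below -/
import Mathlib

section
/- For any integers d, k with 2 ≤ d and 2d ≤ k (i.e. d ≤ k/2), we have M(d,k) ≤ M(d+1,k). That is, increasing the dimension does not decrease McMullen's bound as long as there are sufficiently many facets. -/
/-- McMullen's upper bound `M(d,k)`, defined for integers `2 ≤ d < k` as
`C(k − ⌊(d+1)/2⌋, k − d) + C(k − ⌊(d+2)/2⌋, k − d)`.  Note that `Nat.choose`
already implements the convention `C(a,b) = 0` unless `0 ≤ b ≤ a`. -/
def mcmullen (d k : ℕ) : ℕ :=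
  Nat.choose (k - (d + 1) / 2) (k - d) + Nat.choose (k - (d + 2) / 2) (k - d)

theorem choose_eq_aux (n a b : ℕ) (h : n = a + b) : Nat.choose n a = Nat.choose n b :=
  Nat.choose_symm_of_eq_add h

theorem stmt_2 (d k : ℕ) (h2 : 2 ≤ d) (hdk : 2 * d ≤ k) :
    mcmullen d k ≤ mcmullen (d + 1) k := by
  obtain ⟨t, rfl⟩ := Nat.exists_eq_add_of_le hdk
  unfold mcmullen
  rcases Nat.even_or_odd' d with ⟨m, rfl | rfl⟩
  · obtain ⟨p, rfl⟩ : ∃ p, m = p + 1 := ⟨m - 1, by omega⟩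
    have e1 : 2 * (2 * (p + 1)) + t - (2 * (p + 1) + 1) / 2 = 3 * p + 2 + t + 1 := by omega
    have e2 : 2 * (2 * (p + 1)) + t - (2 * (p + 1) + 2) / 2 = 3 * p + 2 + t := by omega
    have e4 : 2 * (2 * (p + 1)) + t - (2 * (p + 1) + 1 + 2) / 2 = 3 * p + 2 + t := by omega
    rw [e1, e2, e4, choose_eq_aux (3 * p + 2 + t + 1) _ (p + 1) (by omega),
      choose_eq_aux (3 * p + 2 + t) (2 * (2 * (p + 1)) + t - 2 * (p + 1)) p (by omega),
      choose_eq_aux (3 * p + 2 + t) (2 * (2 * (p + 1)) + t - (2 * (p + 1) + 1)) (p + 1) (by omega),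
      Nat.choose_succ_succ]
    have h := Nat.choose_succ_right_eq (3 * p + 2 + t) p
    have e5 : 3 * p + 2 + t - p = 2 * (p + 1) + t := by omega
    rw [e5] at h
    generalize Nat.choose (3 * p + 2 + t) p = A at *
    generalize Nat.choose (3 * p + 2 + t) (p + 1) = B at *
    have : 2 * A ≤ B := by
      apply Nat.le_of_mul_le_mul_right (c := p + 1) _ (by omega)
      rw [h]
      nlinarith [Nat.zero_le (A * t)]
    omega
  · have e1 : 2 * (2 * m + 1) + t - (2 * m + 1 + 1) / 2 = 3 * m + t + 1 := by omega
    have e2 : 2 * (2 * m + 1) + t - (2 * m + 1 + 2) / 2 = 3 * m + t + 1 := by omega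
    have e4 : 2 * (2 * m + 1) + t - (2 * m + 1 + 1 + 2) / 2 = 3 * m + t := by omega
    rw [e1, e2, e4,
      choose_eq_aux (3 * m + t + 1) (2 * (2 * m + 1) + t - (2 * m + 1)) m (by omega),
      choose_eq_aux (3 * m + t + 1) (2 * (2 * m + 1) + t - (2 * m + 1 + 1)) (m + 1) (by omega),
      choose_eq_aux (3 * m + t) (2 * (2 * m + 1) + t - (2 * m + 1 + 1)) m (by omega)]
    have h := Nat.choose_succ_right_eq (3 * m + t + 1) m
    have h' := Nat.choose_mul_succ_eq (3 * m + t) m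
    have e5 : 3 * m + t + 1 - m = 2 * m + 1 + t := by omega
    rw [e5] at h h'
    generalize Nat.choose (3 * m + t + 1) m = A at *
    generalize Nat.choose (3 * m + t + 1) (m + 1) = B at *
    generalize Nat.choose (3 * m + t) m = D at *
    apply Nat.le_of_mul_le_mul_right (c := (m + 1) * (3 * m + t + 1)) _ (by positivity)
    have : (B + D) * ((m + 1) * (3 * m + t + 1))
        = A * (2 * m + 1 + t) * (3 * m + t + 1) + A * (2 * m + 1 + t) * (m + 1) := by
      rw [← h]
      nth_rewrite 2 [h]
      rw [← h']
      ring
    rw [this]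
    have h3 : 2 * ((m + 1) * (3 * m + t + 1))
        ≤ (2 * m + 1 + t) * (3 * m + t + 1) + (2 * m + 1 + t) * (m + 1) := by nlinarith
    nlinarith [Nat.mul_le_mul_left A h3]
end

section
/- For any integers s ≥ 1 and k with 4s ≤ k, the binomial coefficients satisfy C(k−s, s) + C(k−s−1, s−1) ≤ 2·C(k−s−1, s). -/
theorem stmt_3 (s k : ℕ) (hs : 1 ≤ s) (hk : 4 * s ≤ k) :
    Nat.choose (k - s) s + Nat.choose (k - s - 1) (s - 1) ≤
      2 * Nat.choose (k - s - 1) s := by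
  obtain ⟨t, rfl⟩ : ∃ t, s = t + 1 := ⟨s - 1, by omega⟩
  obtain ⟨n, hn⟩ : ∃ n, k - (t + 1) = n + 1 := ⟨k - (t + 1) - 1, by omega⟩
  rw [hn, Nat.add_sub_cancel, Nat.add_sub_cancel, Nat.choose_succ_succ']
  have h := Nat.choose_succ_right_eq n t
  have h2 : 2 * (t + 1) ≤ n - t := by omega
  have h3 : 2 * n.choose t ≤ n.choose (t + 1) := by
    refine Nat.le_of_mul_le_mul_right (c := t + 1) ?_ (Nat.succ_pos t)
    rw [h]
    calc 2 * n.choose t * (t + 1) = n.choose t * (2 * (t + 1)) := by ring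
      _ ≤ _ := Nat.mul_le_mul_left _ h2
  omega
end

section
/- For any real α with 0 < α ≤ 1 and any integer k > 2, the following identity holds: ∑_{d=2}^{k−1} α^d · M(d,k) = S_{α²}(k) + α²·S_{α²}(k−2) + 2α·S_{α²}(k−1) − 2α^k − 2α − 1. -/
/-- The sum `S_β(m) = ∑_{i=0}^{⌊m/2⌋} β^i · C(m − i, i)`. -/
noncomputable def Ssum (β : ℝ) (m : ℕ) : ℝ :=
  ∑ i ∈ Finset.range (m / 2 + 1), β ^ i * (Nat.choose (m - i) i : ℝ)

lemma split_parity (f : ℕ → ℝ) (n : ℕ) :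
    ∑ d ∈ Finset.range n, f d = ∑ i ∈ Finset.range ((n + 1) / 2), f (2 * i) +
      ∑ i ∈ Finset.range (n / 2), f (2 * i + 1) := by
  induction n with
  | zero => simp
  | succ n ih =>
    rw [Finset.sum_range_succ, ih]
    rcases Nat.even_or_odd' n with ⟨m, rfl | rfl⟩
    · have h1 : (2 * m + 1) / 2 = m := by omega
      have h2 : (2 * m) / 2 = m := by omega
      have h3 : (2 * m + 1 + 1) / 2 = m + 1 := by omega
      rw [h1, h2, h3, Finset.sum_range_succ]
      ring
    · have h1 : (2 * m + 1) / 2 = m := by omega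
      have h3 : (2 * m + 1 + 1) / 2 = m + 1 := by omega
      have h4 : (2 * m + 1 + 1 + 1) / 2 = m + 1 := by omega
      rw [h1, h3, h4, Finset.sum_range_succ (fun i => f (2 * i + 1))]
      ring

theorem stmt_7 (α : ℝ) (hα₀ : 0 < α) (hα₁ : α ≤ 1) (k : ℕ) (hk : 2 < k) :
    ∑ d ∈ Finset.Icc 2 (k - 1), α ^ d * (mcmullen d k : ℝ) =
      Ssum (α ^ 2) k + α ^ 2 * Ssum (α ^ 2) (k - 2) +
        2 * α * Ssum (α ^ 2) (k - 1) - 2 * α ^ k - 2 * α - 1 := by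
  have hodd : ∑ i ∈ Finset.range ((k + 1) / 2), α ^ (2 * i + 1) * (mcmullen (2 * i + 1) k : ℝ)
      = 2 * α * Ssum (α ^ 2) (k - 1) := by
    unfold Ssum
    rw [show (k - 1) / 2 + 1 = (k + 1) / 2 by omega, Finset.mul_sum]
    refine Finset.sum_congr rfl fun i hi => ?_
    rw [Finset.mem_range] at hi
    have : mcmullen (2 * i + 1) k = 2 * Nat.choose (k - 1 - i) i := by
      unfold mcmullen
      rw [show k - (2 * i + 1 + 1) / 2 = k - 1 - i by omega,
        show k - (2 * i + 1 + 2) / 2 = k - 1 - i by omega,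
        ← Nat.choose_symm_of_eq_add (show k - 1 - i = i + (k - (2 * i + 1)) by omega)]
      ring
    rw [this]
    push_cast
    ring
  have heven : ∑ i ∈ Finset.range (k / 2 + 1), α ^ (2 * i) * (mcmullen (2 * i) k : ℝ)
      = Ssum (α ^ 2) k + α ^ 2 * Ssum (α ^ 2) (k - 2) := by
    have e1 : ∀ i ∈ Finset.range (k / 2 + 1), α ^ (2 * i) * (mcmullen (2 * i) k : ℝ) =
        (α ^ 2) ^ i * (Nat.choose (k - i) i : ℝ)
          + α ^ (2 * i) * (Nat.choose (k - (i + 1)) (k - 2 * i) : ℝ) := by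
      intro i hi
      rw [Finset.mem_range] at hi
      unfold mcmullen
      rw [show k - (2 * i + 1) / 2 = k - i by omega,
        show k - (2 * i + 2) / 2 = k - (i + 1) by omega,
        ← Nat.choose_symm_of_eq_add (show k - i = i + (k - 2 * i) by omega)]
      push_cast
      ring
    rw [Finset.sum_congr rfl e1, Finset.sum_add_distrib]
    unfold Ssum
    congr 1
    rw [Finset.sum_range_succ', show (k - 2) / 2 + 1 = k / 2 by omega, Finset.mul_sum]
    rw [Nat.choose_eq_zero_of_lt (show k - (0 + 1) < k - 2 * 0 by omega)]
    simp only [Nat.cast_zero, mul_zero, add_zero]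
    refine Finset.sum_congr rfl fun i hi => ?_
    rw [Finset.mem_range] at hi
    rw [show k - (i + 1 + 1) = k - 2 - i by omega,
      ← Nat.choose_symm_of_eq_add (show k - 2 - i = i + (k - 2 * (i + 1)) by omega)]
    ring
  have hs := split_parity (fun d => α ^ d * (mcmullen d k : ℝ)) (k + 1)
  rw [show (k + 1 + 1) / 2 = k / 2 + 1 by omega] at hs
  rw [hodd, heven] at hs
  have h0 : mcmullen 0 k = 1 := by
    unfold mcmullen
    simp
    exact Nat.choose_eq_zero_of_lt (by omega)
  have h1 : mcmullen 1 k = 2 := by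
    unfold mcmullen
    norm_num
  have h2 : mcmullen k k = 2 := by
    unfold mcmullen
    simp
  have hI : Finset.Icc 2 (k - 1) = Finset.Ico 2 k := by
    ext x
    simp only [Finset.mem_Icc, Finset.mem_Ico]
    omega
  rw [Finset.sum_range_succ, ← Finset.sum_range_add_sum_Ico _ (show 2 ≤ k by omega),
    Finset.sum_range_succ, Finset.sum_range_one, h0, h1, h2, ← hI] at hs
  push_cast at hs
  linarith
end

section
/- For any real α with 0 < α ≤ 1, the sum ∑_{d=2}^{k−1} α^d · M(d,k), viewed as a function of the integer k > 2, has asymptotic growth rate Θ( ((1 + √(1 + 4α²))/2)^k ) as k → ∞; that is, there exist constants c₁, c₂ > 0 such that the sum lies between c₁·((1+√(1+4α²))/2)^k and c₂·((1+√(1+4α²))/2)^k for all sufficiently large k. -/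
lemma mc_rec (d k : ℕ) (h : d < k) :
    mcmullen (d + 2) (k + 2) = mcmullen (d + 2) (k + 1) + mcmullen d k := by
  unfold mcmullen
  have e1 : k + 2 - (d + 2 + 1) / 2 = (k - (d + 1) / 2) + 1 := by omega
  have e2 : k + 2 - (d + 2) = (k - 1 - d) + 1 := by omega
  have e3 : k + 2 - (d + 2 + 2) / 2 = (k - (d + 2) / 2) + 1 := by omega
  have e4 : k + 1 - (d + 2 + 1) / 2 = k - (d + 1) / 2 := by omega
  have e5 : k + 1 - (d + 2 + 2) / 2 = k - (d + 2) / 2 := by omega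
  have e6 : k + 1 - (d + 2) = k - 1 - d := by omega
  have e7 : k - d = (k - 1 - d) + 1 := by omega
  rw [e1, e2, e3, e4, e5, e6, e7, Nat.choose_succ_succ', Nat.choose_succ_succ']
  ring

lemma mc_self (k : ℕ) : mcmullen k k = 2 := by simp [mcmullen]

lemma mc_zero (k : ℕ) : mcmullen 0 (k + 1) = 1 := by
  simp [mcmullen]

lemma mc_one (k : ℕ) : mcmullen 1 (k + 1) = 2 := by
  simp [mcmullen]

noncomputable def mcS (α : ℝ) (k : ℕ) : ℝ :=
  ∑ d ∈ Finset.range (k + 1), α ^ d * (mcmullen d k : ℝ)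

lemma mcS_rec (α : ℝ) (k : ℕ) :
    mcS α (k + 3) = mcS α (k + 2) + α ^ 2 * mcS α (k + 1) := by
  unfold mcS
  rw [Finset.sum_range_succ' (fun d => α ^ d * (mcmullen d (k + 3) : ℝ)) (k + 3),
    Finset.sum_range_succ' (fun d => α ^ (d + 1) * (mcmullen (d + 1) (k + 3) : ℝ)) (k + 2),
    Finset.sum_range_succ (fun d => α ^ (d + 1 + 1) * (mcmullen (d + 1 + 1) (k + 3) : ℝ)) (k + 1),
    Finset.sum_range_succ' (fun d => α ^ d * (mcmullen d (k + 2) : ℝ)) (k + 2),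
    Finset.sum_range_succ' (fun d => α ^ (d + 1) * (mcmullen (d + 1) (k + 2) : ℝ)) (k + 1),
    Finset.sum_range_succ (fun d => α ^ d * (mcmullen d (k + 1) : ℝ)) (k + 1)]
  have h : ∑ d ∈ Finset.range (k + 1), α ^ (d + 1 + 1) * (mcmullen (d + 1 + 1) (k + 3) : ℝ)
      = ∑ d ∈ Finset.range (k + 1), α ^ (d + 1 + 1) * (mcmullen (d + 1 + 1) (k + 2) : ℝ)
      + α ^ 2 * ∑ d ∈ Finset.range (k + 1), α ^ d * (mcmullen d (k + 1) : ℝ) := by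
    rw [Finset.mul_sum, ← Finset.sum_add_distrib]
    refine Finset.sum_congr rfl fun d hd => ?_
    rw [Finset.mem_range] at hd
    have := mc_rec d (k + 1) hd
    rw [show mcmullen (d + 1 + 1) (k + 3) = _ from this]
    push_cast
    ring
  rw [h]
  have a1 := mc_self (k + 1)
  have a2 : mcmullen (k + 1 + 1 + 1) (k + 3) = 2 := mc_self (k + 3)
  have a3 := mc_zero (k + 2)
  have a4 := mc_zero (k + 1)
  have a5 : mcmullen (0 + 1) (k + 3) = 2 := mc_one (k + 2)
  have a6 : mcmullen (0 + 1) (k + 2) = 2 := mc_one (k + 1)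
  rw [a1, a2, a3, a4, a5, a6]
  push_cast
  ring

lemma mc_nonneg (a : ℝ) (u : ℕ → ℝ) (h0 : 0 ≤ u 0) (h1 : 0 ≤ u 1)
    (h : ∀ n, u (n + 2) = u (n + 1) + a ^ 2 * u n) : ∀ n, 0 ≤ u n ∧ 0 ≤ u (n + 1) := by
  intro n
  induction n with
  | zero => exact ⟨h0, h1⟩
  | succ n ih =>
    refine ⟨ih.2, ?_⟩
    rw [h]
    have := ih.1
    have := ih.2
    positivity

lemma mcS_split (α : ℝ) (k : ℕ) (hk : 2 < k) :
    mcS α k = ∑ d ∈ Finset.Icc 2 (k - 1), α ^ d * (mcmullen d k : ℝ) + (1 + 2 * α + 2 * α ^ k) := by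
  obtain ⟨j, rfl⟩ : ∃ j, k = j + 3 := ⟨k - 3, by omega⟩
  have e : Finset.Icc 2 (j + 3 - 1) = Finset.Ico 2 (j + 3) := by
    ext x; simp only [Finset.mem_Icc, Finset.mem_Ico]; omega
  rw [e, Finset.sum_Ico_eq_sub _ (by omega), mcS, Finset.sum_range_succ]
  have a3 := mc_zero (j + 2)
  have a5 : mcmullen 1 (j + 3) = 2 := mc_one (j + 2)
  simp only [Finset.sum_range_succ, Finset.sum_range_zero, a3, a5, mc_self]
  push_cast
  ring

theorem stmt_8 (α : ℝ) (hα₀ : 0 < α) (hα₁ : α ≤ 1) :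
    ∃ c₁ c₂ : ℝ, 0 < c₁ ∧ 0 < c₂ ∧ ∃ K : ℕ, ∀ k : ℕ, K ≤ k → 2 < k →
      c₁ * ((1 + Real.sqrt (1 + 4 * α ^ 2)) / 2) ^ k ≤
          ∑ d ∈ Finset.Icc 2 (k - 1), α ^ d * (mcmullen d k : ℝ) ∧
      ∑ d ∈ Finset.Icc 2 (k - 1), α ^ d * (mcmullen d k : ℝ) ≤
          c₂ * ((1 + Real.sqrt (1 + 4 * α ^ 2)) / 2) ^ k := by
  have hs : Real.sqrt (1 + 4 * α ^ 2) ^ 2 = 1 + 4 * α ^ 2 := Real.sq_sqrt (by positivity)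
  have hs1 : 1 < Real.sqrt (1 + 4 * α ^ 2) := by
    rw [Real.lt_sqrt (by norm_num)]
    nlinarith
  set φ := (1 + Real.sqrt (1 + 4 * α ^ 2)) / 2 with hφ
  have hφ1 : 1 < φ := by rw [hφ]; linarith
  have hφ2 : φ ^ 2 = φ + α ^ 2 := by rw [hφ]; nlinarith
  have hφ0 : 0 < φ := by linarith
  have hpow (n : ℕ) : φ ^ (n + 3) = φ ^ (n + 2) + α ^ 2 * φ ^ (n + 1) := by
    have : φ ^ (n + 3) = φ ^ (n + 1) * φ ^ 2 := by ring
    rw [this, hφ2]; ring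
  have hS1 : 0 < mcS α 1 := by
    simp only [mcS, Finset.sum_range_succ, Finset.sum_range_zero, mc_zero 0, mc_self]
    norm_num; positivity
  have hS2 : 0 < mcS α 2 := by
    have a : mcmullen 1 2 = 2 := mc_one 1
    simp only [mcS, Finset.sum_range_succ, Finset.sum_range_zero, mc_zero 1, mc_self, a]
    norm_num; positivity
  set p := mcS α 1 / φ with hp
  set q := mcS α 2 / φ ^ 2 with hq
  have hp0 : 0 < p := by positivity
  have hq0 : 0 < q := by positivity
  have ep : mcS α 1 = p * φ := by rw [hp]; field_simp
  have eq : mcS α 2 = q * φ ^ 2 := by rw [hq]; field_simp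
  have hc : 0 < min p q := lt_min hp0 hq0
  set c := min p q
  have hcp : c ≤ p := min_le_left _ _
  have hcq : c ≤ q := min_le_right _ _
  have lo := mc_nonneg α (fun n => mcS α (n + 1) - c * φ ^ (n + 1))
    (by simp only [zero_add, ep, pow_one]; nlinarith)
    (by simp only [Nat.reduceAdd, eq]; nlinarith [pow_pos hφ0 2])
    (fun n => by
      have := mcS_rec α n
      have := hpow n
      simp only [add_assoc, Nat.reduceAdd] at *
      rw [mcS_rec, hpow]; ring)
  have hi := mc_nonneg α (fun n => (p + q) * φ ^ (n + 1) - mcS α (n + 1))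
    (by simp only [zero_add, ep, pow_one]; nlinarith)
    (by simp only [Nat.reduceAdd, eq]; nlinarith [pow_pos hφ0 2])
    (fun n => by
      simp only [add_assoc, Nat.reduceAdd] at *
      rw [mcS_rec, hpow]; ring)
  obtain ⟨K, hK⟩ := pow_unbounded_of_one_lt (10 / c) hφ1
  refine ⟨c / 2, p + q, by positivity, by positivity, K, fun k hk hk2 => ?_⟩
  have hl := (lo (k - 1)).1
  have hh := (hi (k - 1)).1
  simp only [show k - 1 + 1 = k by omega] at hl hh
  have hsp := mcS_split α k hk2
  have hk' : 10 / c < φ ^ k := hK.trans_le (pow_le_pow_right₀ hφ1.le hk)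
  rw [div_lt_iff₀ hc] at hk'
  have h1 : α ^ k ≤ 1 := pow_le_one₀ hα₀.le hα₁
  have h0 : 0 < α ^ k := by positivity
  constructor <;> nlinarith
end

section
/- Let F ⊆ ℝ^{3n} be a convex set contained in the non-negative orthant such that every point of F satisfies the quadrilateral constraints. Then any two points of F are compatible. -/
/-- A point of `ℝ^{3n}` (coordinates indexed by tetrahedron `i` and
quadrilateral type `j`) satisfies the *quadrilateral constraints* if for each
`i` at most one of the three coordinates `x (i, j)` is non-zero. -/
def QuadOK {n : ℕ} (x : Fin n × Fin 3 → ℝ) : Prop :=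
  ∀ i : Fin n, ∀ j j' : Fin 3, x (i, j) ≠ 0 → x (i, j') ≠ 0 → j = j'

/-- Two points `x, y` of `ℝ^{3n}` are *compatible* if for each `i` at most one
index `j` has `x (i, j) ≠ 0` or `y (i, j) ≠ 0`. -/
def Compat {n : ℕ} (x y : Fin n × Fin 3 → ℝ) : Prop :=
  ∀ i : Fin n, ∀ j j' : Fin 3,
    (x (i, j) ≠ 0 ∨ y (i, j) ≠ 0) → (x (i, j') ≠ 0 ∨ y (i, j') ≠ 0) → j = j'

/-- The non-negative orthant of `ℝ^{3n}`. -/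
def Orthant (n : ℕ) : Set (Fin n × Fin 3 → ℝ) := {x | ∀ p, 0 ≤ x p}

/-- An *admissible face* of `P`: an exposed face of `P` all of whose points
satisfy the quadrilateral constraints. -/
def AdmFace {n : ℕ} (P F : Set (Fin n × Fin 3 → ℝ)) : Prop :=
  IsExposed ℝ P F ∧ ∀ x ∈ F, QuadOK x

/-- A *maximal admissible face* of `P`: an admissible face of `P` that is not
strictly contained in any other admissible face of `P`. -/
def MaxAdmFace {n : ℕ} (P F : Set (Fin n × Fin 3 → ℝ)) : Prop :=
  AdmFace P F ∧ ∀ G, AdmFace P G → ¬ F ⊂ G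

theorem stmt_9 {n : ℕ} (hn : 1 ≤ n) (F : Set (Fin n × Fin 3 → ℝ))
    (hconv : Convex ℝ F) (horth : F ⊆ Orthant n)
    (hadm : ∀ x ∈ F, QuadOK x) :
    ∀ x ∈ F, ∀ y ∈ F, Compat x y := by
  intro x hx y hy i j j' h h'
  have hm := hconv hx hy (a := 1/2) (b := 1/2) (by norm_num) (by norm_num) (by norm_num)
  have key : ∀ p, (x p ≠ 0 ∨ y p ≠ 0) → ((1/2 : ℝ) • x + (1/2 : ℝ) • y) p ≠ 0 := by
    intro p hp h0
    have h1 : 0 ≤ x p := horth hx p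
    have h2 : 0 ≤ y p := horth hy p
    simp only [Pi.add_apply, Pi.smul_apply, smul_eq_mul] at h0
    rcases hp with hp | hp
    · exact hp (by linarith)
    · exact hp (by linarith)
  exact hadm _ hm i j j' (key _ h) (key _ h')
end

section
/- Let P ⊆ ℝ^{3n} be a set contained in the non-negative orthant, and let p ∈ P be a point satisfying the quadrilateral constraints. Then there exists an exposed face F of P with p ∈ F such that every point of F satisfies the quadrilateral constraints. -/
theorem stmt_10 {n : ℕ} (hn : 1 ≤ n) (P : Set (Fin n × Fin 3 → ℝ))
    (horth : P ⊆ Orthant n) (p : Fin n × Fin 3 → ℝ) (hp : p ∈ P)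
    (hquad : QuadOK p) :
    ∃ F : Set (Fin n × Fin 3 → ℝ),
      IsExposed ℝ P F ∧ p ∈ F ∧ ∀ x ∈ F, QuadOK x := by
  classical
  let l : StrongDual ℝ (Fin n × Fin 3 → ℝ) :=
    -∑ k ∈ Finset.univ.filter (fun k => p k = 0), ContinuousLinearMap.proj (R := ℝ) k
  have hl : ∀ x, l x = -∑ k ∈ Finset.univ.filter (fun k => p k = 0), x k := by
    intro x
    simp [l]
  have hlp : l p = 0 := by
    rw [hl, neg_eq_zero]
    exact Finset.sum_eq_zero (fun k hk => (Finset.mem_filter.mp hk).2)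
  refine ⟨{x ∈ P | ∀ y ∈ P, l y ≤ l x}, fun _ => ⟨l, rfl⟩, ⟨hp, fun y hy => ?_⟩, ?_⟩
  · rw [hlp, hl, neg_nonpos]
    exact Finset.sum_nonneg (fun k _ => horth hy k)
  · rintro x ⟨hx, hmax⟩
    have h1 := hmax p hp
    rw [hlp, hl] at h1
    have h0 : ∀ k ∈ Finset.univ.filter (fun k => p k = 0), 0 ≤ x k := fun k _ => horth hx k
    have h2 := (Finset.sum_eq_zero_iff_of_nonneg h0).mp
      (le_antisymm (by linarith) (Finset.sum_nonneg h0))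
    have h3 : ∀ k, x k ≠ 0 → p k ≠ 0 := fun k hk hpk =>
      hk (h2 k (Finset.mem_filter.mpr ⟨Finset.mem_univ _, hpk⟩))
    exact fun i j j' hj hj' => hquad i j j' (h3 _ hj) (h3 _ hj')
end

section
/- Let P ⊆ ℝ^{3n} be a set contained in the non-negative orthant, and let X ⊆ P be a set of points that are pairwise compatible (in particular every point of X satisfies the quadrilateral constraints). Then there exists a maximal admissible face F of P with X ⊆ F; that is, F is an exposed face of P all of whose points satisfy the quadrilateral constraints, X ⊆ F, and F is not strictly contained in any other exposed face of P all of whose points satisfy the quadrilateral constraints. -/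
theorem aux_span {n : ℕ} (P F : Set (Fin n × Fin 3 → ℝ)) (hF : IsExposed ℝ P F)
    (x : Fin n × Fin 3 → ℝ) (hx : x ∈ P)
    (hs : (x, (1 : ℝ)) ∈ Submodule.span ℝ ((fun y => (y, (1 : ℝ))) '' F)) : x ∈ F := by
  rcases F.eq_empty_or_nonempty with rfl | hne
  · simp at hs
  · obtain ⟨w, hw⟩ := hne
    obtain ⟨l, hl⟩ := hF ⟨w, hw⟩
    have hw' : w ∈ P ∧ ∀ y ∈ P, l y ≤ l w := by rw [hl] at hw; exact hw
    let L : ((Fin n × Fin 3 → ℝ) × ℝ) →ₗ[ℝ] ℝ :=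
      (l : (Fin n × Fin 3 → ℝ) →ₗ[ℝ] ℝ).comp (LinearMap.fst ℝ _ _) - (l w) • LinearMap.snd ℝ _ _
    have hle : Submodule.span ℝ ((fun y => (y, (1 : ℝ))) '' F) ≤ LinearMap.ker L := by
      rw [Submodule.span_le]
      rintro _ ⟨y, hy, rfl⟩
      rw [hl] at hy
      have h1 := hy.2 w hw'.1
      have h2 := hw'.2 y hy.1
      have : L (y, 1) = 0 := by simp [L]; linarith
      exact this
    have h3 : L (x, 1) = 0 := hle hs
    have h4 : l x = l w := by simp [L] at h3; linarith
    rw [hl]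
    exact ⟨hx, fun y hy => h4 ▸ hw'.2 y hy⟩

theorem aux_init {n : ℕ} (P : Set (Fin n × Fin 3 → ℝ))
    (horth : P ⊆ Orthant n) (X : Set (Fin n × Fin 3 → ℝ)) (hXP : X ⊆ P)
    (hcompat : ∀ x ∈ X, ∀ y ∈ X, Compat x y) :
    ∃ F : Set (Fin n × Fin 3 → ℝ), AdmFace P F ∧ X ⊆ F := by
  classical
  refine ⟨{x ∈ P | ∀ p, (∀ y ∈ X, y p = 0) → x p = 0}, ⟨?_, ?_⟩, ?_⟩
  · rintro ⟨w, hwP, hw⟩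
    let S : Finset (Fin n × Fin 3) := Finset.univ.filter (fun p => ∀ y ∈ X, y p = 0)
    have hS : ∀ p, p ∈ S ↔ ∀ y ∈ X, y p = 0 := fun p => by simp [S]
    let l : StrongDual ℝ (Fin n × Fin 3 → ℝ) :=
      -∑ p ∈ S, ContinuousLinearMap.proj (R := ℝ) (φ := fun _ : Fin n × Fin 3 => ℝ) p
    have hl : ∀ x, l x = -∑ p ∈ S, x p := fun x => by simp [l]
    refine ⟨l, ?_⟩
    ext x
    constructor
    · rintro ⟨hxP, hx⟩
      refine ⟨hxP, fun y hy => ?_⟩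
      rw [hl, hl, Finset.sum_eq_zero (fun p hp => hx p ((hS p).1 hp))]
      have := Finset.sum_nonneg (fun p (_ : p ∈ S) => horth hy p)
      linarith
    · rintro ⟨hxP, hx⟩
      refine ⟨hxP, fun p hp => ?_⟩
      have h1 := hx w hwP
      rw [hl, hl, Finset.sum_eq_zero (fun p hp => hw p ((hS p).1 hp))] at h1
      have h2 := Finset.single_le_sum (f := x) (fun p (_ : p ∈ S) => horth hxP p) ((hS p).2 hp)
      have h3 := horth hxP p
      linarith
  · rintro x ⟨-, hx⟩ i j j' hj hj'
    have h1 : ∃ y ∈ X, y (i, j) ≠ 0 := by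
      by_contra! h
      exact hj (hx _ h)
    have h2 : ∃ y ∈ X, y (i, j') ≠ 0 := by
      by_contra! h
      exact hj' (hx _ h)
    obtain ⟨y, hy, hyj⟩ := h1
    obtain ⟨z, hz, hzj⟩ := h2
    exact hcompat y hy z hz i j j' (Or.inl hyj) (Or.inr hzj)
  · exact fun x hx => ⟨hXP hx, fun p hp => hp x hx⟩

theorem stmt_11 {n : ℕ} (hn : 1 ≤ n) (P : Set (Fin n × Fin 3 → ℝ))
    (horth : P ⊆ Orthant n) (X : Set (Fin n × Fin 3 → ℝ)) (hXP : X ⊆ P)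
    (hcompat : ∀ x ∈ X, ∀ y ∈ X, Compat x y) :
    ∃ F : Set (Fin n × Fin 3 → ℝ), MaxAdmFace P F ∧ X ⊆ F := by
  obtain ⟨F0, hF0, hX0⟩ := aux_init P horth X hXP hcompat
  let f : Set (Fin n × Fin 3 → ℝ) → Submodule ℝ ((Fin n × Fin 3 → ℝ) × ℝ) :=
    fun F => Submodule.span ℝ ((fun y => (y, (1 : ℝ))) '' F)
  obtain ⟨F, ⟨hF, hXF⟩, hmax⟩ := (InvImage.wf f
    (wellFounded_gt (α := Submodule ℝ ((Fin n × Fin 3 → ℝ) × ℝ)))).has_min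
    {F | AdmFace P F ∧ X ⊆ F} ⟨F0, hF0, hX0⟩
  refine ⟨F, ⟨hF, fun G hG hFG => ?_⟩, hXF⟩
  refine hmax G ⟨hG, hXF.trans hFG.1⟩ ?_
  have hle : f F ≤ f G := Submodule.span_mono (Set.image_mono hFG.1)
  refine lt_of_le_not_ge hle fun hge => hFG.2 fun x hx => ?_
  exact aux_span P F hF.1 x (hG.1.subset hx) (hge (Submodule.subset_span ⟨x, hx, rfl⟩))
end

section
/- Let P ⊆ ℝ^{3n} be a set contained in the non-negative orthant. Then the set of points of P satisfying the quadrilateral constraints is exactly the union of the maximal admissible faces of P; in particular, every point of P satisfying the quadrilateral constraints belongs to some maximal admissible face of P. -/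
lemma exists_adm {n : ℕ} (P : Set (Fin n × Fin 3 → ℝ)) (horth : P ⊆ Orthant n)
    (x : Fin n × Fin 3 → ℝ) (hx : x ∈ P) (hq : QuadOK x) : ∃ F, AdmFace P F ∧ x ∈ F := by
  classical
  let l : StrongDual ℝ (Fin n × Fin 3 → ℝ) :=
    -∑ p ∈ Finset.univ.filter (fun p => x p = 0), ContinuousLinearMap.proj p
  have hl : ∀ y, l y = -∑ p ∈ Finset.univ.filter (fun p => x p = 0), y p := by
    intro y
    simp [l]
  have hlx : l x = 0 := by
    rw [hl, Finset.sum_eq_zero, neg_zero]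
    intro p hp
    exact (Finset.mem_filter.1 hp).2
  refine ⟨{y ∈ P | ∀ z ∈ P, l z ≤ l y}, ⟨fun _ => ⟨l, rfl⟩, ?_⟩, hx, ?_⟩
  · rintro y ⟨hy, hm⟩
    have h1 := hm x hx
    rw [hlx, hl] at h1
    have h0 : ∀ p ∈ Finset.univ.filter (fun p => x p = 0), 0 ≤ y p := fun p _ => horth hy p
    have h2 : ∑ p ∈ Finset.univ.filter (fun p => x p = 0), y p = 0 :=
      le_antisymm (by linarith) (Finset.sum_nonneg h0)
    rw [Finset.sum_eq_zero_iff_of_nonneg h0] at h2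
    have h3 : ∀ p, y p ≠ 0 → x p ≠ 0 := fun p hp hx0 => hp (h2 p (by simp [hx0]))
    exact fun i j j' a b => hq i j j' (h3 _ a) (h3 _ b)
  · intro z hz
    rw [hlx, hl, neg_nonpos]
    exact Finset.sum_nonneg fun p _ => horth hz p

theorem stmt_12 {n : ℕ} (hn : 1 ≤ n) (P : Set (Fin n × Fin 3 → ℝ))
    (horth : P ⊆ Orthant n) :
    {x ∈ P | QuadOK x} = ⋃₀ {F : Set (Fin n × Fin 3 → ℝ) | MaxAdmFace P F} := by
  ext x
  constructor
  · rintro ⟨hx, hq⟩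
    obtain ⟨F₀, hF₀, hxF₀⟩ := exists_adm P horth x hx hq
    obtain ⟨V, ⟨F, ⟨hF, hxF⟩, rfl⟩, hmax⟩ :=
      (wellFounded_gt (α := Submodule ℝ (Fin n × Fin 3 → ℝ))).has_min
        ((fun F => vectorSpan ℝ F) '' {F | AdmFace P F ∧ x ∈ F}) ⟨_, F₀, ⟨hF₀, hxF₀⟩, rfl⟩
    refine ⟨F, ⟨hF, fun G hG hFG => hFG.2 ?_⟩, hxF⟩
    have hle : vectorSpan ℝ F ≤ vectorSpan ℝ G := vectorSpan_mono ℝ hFG.1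
    have heq : vectorSpan ℝ F = vectorSpan ℝ G := by
      by_contra hne
      exact hmax _ ⟨G, ⟨hG, hFG.1 hxF⟩, rfl⟩ (lt_of_le_of_ne hle hne)
    obtain ⟨l, hl⟩ := hF.1 ⟨x, hxF⟩
    have hker : vectorSpan ℝ F ≤ LinearMap.ker (l : (Fin n × Fin 3 → ℝ) →ₗ[ℝ] ℝ) := by
      rw [vectorSpan_def, Submodule.span_le]
      rintro _ ⟨a, ha, b, hb, rfl⟩
      rw [hl] at ha hb
      have h1 := ha.2 b hb.1
      have h2 := hb.2 a ha.1
      simp only [vsub_eq_sub, SetLike.mem_coe, LinearMap.mem_ker, map_sub,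
        ContinuousLinearMap.coe_coe]
      linarith
    intro y hy
    have h := hker (heq ▸ vsub_mem_vectorSpan ℝ hy (hFG.1 hxF))
    simp only [vsub_eq_sub, LinearMap.mem_ker, map_sub, ContinuousLinearMap.coe_coe] at h
    have hyP := hG.1.subset hy
    rw [hl] at hxF ⊢
    exact ⟨hyP, fun z hz => by linarith [hxF.2 z hz]⟩
  · rintro ⟨F, hF, hx⟩
    exact ⟨hF.1.1.subset hx, hF.1.2 x hx⟩
end

section
/- Let P ⊆ ℝ^{3n} be a convex set contained in the non-negative orthant, and let F be an admissible face of P. Then F is a maximal admissible face of P if and only if there is no point x ∈ P \ F that satisfies the quadrilateral constraints and is compatible with every point of F. -/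
theorem compat_of_mid {n : ℕ} {P G : Set (Fin n × Fin 3 → ℝ)} (hconv : Convex ℝ P)
    (horth : P ⊆ Orthant n) (hG : AdmFace P G) {x y : Fin n × Fin 3 → ℝ}
    (hx : x ∈ G) (hy : y ∈ G) : Compat x y := by
  have hm : (1/2 : ℝ) • x + (1/2 : ℝ) • y ∈ G :=
    hG.1.convex hconv hx hy (by norm_num) (by norm_num) (by norm_num)
  have key : ∀ p, (x p ≠ 0 ∨ y p ≠ 0) → ((1/2 : ℝ) • x + (1/2 : ℝ) • y) p ≠ 0 := by
    intro p hp h0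
    have h1 := horth (hG.1.subset hx) p
    have h2 := horth (hG.1.subset hy) p
    simp only [Pi.add_apply, Pi.smul_apply, smul_eq_mul] at h0
    rcases hp with hp | hp
    · exact hp (by linarith)
    · exact hp (by linarith)
  intro i j j' h h'
  exact hG.2 _ hm i j j' (key _ h) (key _ h')

theorem stmt_13 {n : ℕ} (hn : 1 ≤ n) (P : Set (Fin n × Fin 3 → ℝ))
    (hconv : Convex ℝ P) (horth : P ⊆ Orthant n)
    (F : Set (Fin n × Fin 3 → ℝ)) (hF : AdmFace P F) :
    MaxAdmFace P F ↔
      ¬ ∃ x, x ∈ P \ F ∧ QuadOK x ∧ ∀ y ∈ F, Compat x y := by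
  constructor
  · rintro ⟨-, hmax⟩ ⟨x, ⟨hxP, hxF⟩, hxQ, hxc⟩
    classical
    let S : Set (Fin n × Fin 3) := {p | x p ≠ 0 ∨ ∃ y ∈ F, y p ≠ 0}
    let T : Finset (Fin n × Fin 3) := Finset.univ.filter (fun p => p ∉ S)
    let l : (Fin n × Fin 3 → ℝ) →L[ℝ] ℝ :=
      -∑ p ∈ T, ContinuousLinearMap.proj (R := ℝ) (φ := fun _ : Fin n × Fin 3 => ℝ) p
    have hl : ∀ z, l z = -∑ p ∈ T, z p := by
      intro z
      simp [l]
    have hlP : ∀ z ∈ P, l z ≤ 0 := by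
      intro z hz
      rw [hl]
      have := Finset.sum_nonneg (s := T) (fun p _ => horth hz p)
      linarith
    have hl0 : ∀ z, (∀ p, p ∉ S → z p = 0) → l z = 0 := by
      intro z hz
      rw [hl, Finset.sum_eq_zero, neg_zero]
      intro p hp
      exact hz p (Finset.mem_filter.1 hp).2
    have hx0 : l x = 0 := hl0 x (fun p hp => by
      by_contra h
      exact hp (Or.inl h))
    let G : Set (Fin n × Fin 3 → ℝ) := {z ∈ P | ∀ y ∈ P, l y ≤ l z}
    have hxG : x ∈ G := ⟨hxP, fun y hy => by rw [hx0]; exact hlP y hy⟩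
    have hGS : ∀ z ∈ G, ∀ p, z p ≠ 0 → p ∈ S := by
      intro z hz p hp
      by_contra hpS
      have h1 := hz.2 x hxP
      rw [hx0, hl] at h1
      have h2 := Finset.single_le_sum (s := T) (f := z) (fun p _ => horth hz.1 p)
        (Finset.mem_filter.2 ⟨Finset.mem_univ p, hpS⟩)
      have h3 := horth hz.1 p
      exact hp (by linarith)
    refine hmax G ⟨fun _ => ⟨l, rfl⟩, ?_⟩ ⟨?_, fun h => hxF (h hxG)⟩
    · intro z hz i j j' hj hj'
      rcases hGS z hz _ hj with h | ⟨y, hy, h⟩ <;>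
        rcases hGS z hz _ hj' with h' | ⟨y', hy', h'⟩
      · exact hxQ i j j' h h'
      · exact hxc y' hy' i j j' (Or.inl h) (Or.inr h')
      · exact hxc y hy i j j' (Or.inr h) (Or.inl h')
      · exact compat_of_mid hconv horth hF hy hy' i j j' (Or.inl h) (Or.inr h')
    · intro y hy
      refine ⟨hF.1.subset hy, fun w hw => ?_⟩
      rw [hl0 y (fun p hp => by
        by_contra h
        exact hp (Or.inr ⟨y, hy, h⟩))]
      exact hlP w hw
  · intro hno
    refine ⟨hF, fun G hG hFG => ?_⟩
    obtain ⟨x, hxG, hxF⟩ := Set.exists_of_ssubset hFG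
    exact hno ⟨x, ⟨hG.1.subset hxG, hxF⟩, hG.2 x hxG,
      fun y hy => compat_of_mid hconv horth hG hxG (hFG.1 hy)⟩
end

section
/- Let P ⊆ ℝ^{3n} be a convex set contained in the non-negative orthant, and let X ⊆ P. Then X is a maximal admissible face of P if and only if X is a maximal subset of P consisting of pairwise compatible points; here 'maximal' means maximal under set inclusion (there is no strictly larger subset of P of the same kind). -/
def hullFace {n : ℕ} (P X : Set (Fin n × Fin 3 → ℝ)) : Set (Fin n × Fin 3 → ℝ) :=
  {y | y ∈ P ∧ ∀ p, (∀ x ∈ X, x p = 0) → y p = 0}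

theorem subset_hullFace {n : ℕ} {P X : Set (Fin n × Fin 3 → ℝ)} (h : X ⊆ P) :
    X ⊆ hullFace P X := fun x hx => ⟨h hx, fun _ hp => hp x hx⟩

theorem hullFace_ne {n : ℕ} {P X : Set (Fin n × Fin 3 → ℝ)} {y : Fin n × Fin 3 → ℝ}
    (hy : y ∈ hullFace P X) {p : Fin n × Fin 3} (hp : y p ≠ 0) : ∃ x ∈ X, x p ≠ 0 := by
  by_contra h
  push Not at h
  exact hp (hy.2 p h)

theorem hullFace_compat {n : ℕ} {P X : Set (Fin n × Fin 3 → ℝ)}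
    (hX : ∀ x ∈ X, ∀ y ∈ X, Compat x y) :
    ∀ x ∈ hullFace P X, ∀ y ∈ hullFace P X, Compat x y := by
  intro x hx y hy i j j' h h'
  have key : ∀ k, (x (i, k) ≠ 0 ∨ y (i, k) ≠ 0) → ∃ z ∈ X, z (i, k) ≠ 0 := by
    rintro k (h | h)
    · exact hullFace_ne hx h
    · exact hullFace_ne hy h
  obtain ⟨z, hz, hz0⟩ := key j h
  obtain ⟨w, hw, hw0⟩ := key j' h'
  exact hX z hz w hw i j j' (Or.inl hz0) (Or.inr hw0)

theorem hullFace_adm {n : ℕ} {P X : Set (Fin n × Fin 3 → ℝ)} (horth : P ⊆ Orthant n)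
    (hX : ∀ x ∈ X, ∀ y ∈ X, Compat x y) : AdmFace P (hullFace P X) := by
  classical
  refine ⟨?_, fun x hx i j j' h h' =>
    hullFace_compat hX x hx x hx i j j' (Or.inl h) (Or.inl h')⟩
  rintro ⟨w, hw⟩
  let S : Finset (Fin n × Fin 3) := Finset.univ.filter fun p => ∀ x ∈ X, x p = 0
  let l : StrongDual ℝ (Fin n × Fin 3 → ℝ) :=
    -∑ p ∈ S, ContinuousLinearMap.proj (R := ℝ) (φ := fun _ : Fin n × Fin 3 => ℝ) p
  have hl : ∀ y, l y = -∑ p ∈ S, y p := by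
    intro y
    simp [l]
  have hz : ∀ y ∈ hullFace P X, ∑ p ∈ S, y p = 0 := fun y hy =>
    Finset.sum_eq_zero fun p hp => hy.2 p (Finset.mem_filter.1 hp).2
  refine ⟨l, Set.Subset.antisymm ?_ ?_⟩
  · intro x hx
    refine ⟨hx.1, fun y hy => ?_⟩
    rw [hl, hl, hz x hx]
    have := Finset.sum_nonneg fun p (_ : p ∈ S) => horth hy p
    linarith
  · rintro x ⟨hx, hmax⟩
    refine ⟨hx, fun p hp => ?_⟩
    have h1 := hmax w hw.1
    rw [hl, hl, hz w hw] at h1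
    have h2 := Finset.single_le_sum (fun p (_ : p ∈ S) => horth hx p)
      (Finset.mem_filter.2 ⟨Finset.mem_univ p, hp⟩ : p ∈ S)
    have h3 := horth hx p
    linarith

theorem adm_compat {n : ℕ} {P F : Set (Fin n × Fin 3 → ℝ)} (hconv : Convex ℝ P)
    (horth : P ⊆ Orthant n) (hF : AdmFace P F) : ∀ x ∈ F, ∀ y ∈ F, Compat x y := by
  intro x hx y hy i j j' h h'
  have hm : (1/2 : ℝ) • x + (1/2 : ℝ) • y ∈ F :=
    hF.1.convex hconv hx hy (by norm_num) (by norm_num) (by norm_num)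
  have key : ∀ p, (x p ≠ 0 ∨ y p ≠ 0) → ((1/2 : ℝ) • x + (1/2 : ℝ) • y) p ≠ 0 := by
    intro p hp h0
    have h1 := horth (hF.1.subset hx) p
    have h2 := horth (hF.1.subset hy) p
    simp only [Pi.add_apply, Pi.smul_apply, smul_eq_mul] at h0
    rcases hp with hp | hp <;> apply hp <;> linarith
  exact hF.2 _ hm i j j' (key _ h) (key _ h')

theorem stmt_14 {n : ℕ} (hn : 1 ≤ n) (P : Set (Fin n × Fin 3 → ℝ))
    (hconv : Convex ℝ P) (horth : P ⊆ Orthant n)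
    (X : Set (Fin n × Fin 3 → ℝ)) (hXP : X ⊆ P) :
    MaxAdmFace P X ↔
      (∀ x ∈ X, ∀ y ∈ X, Compat x y) ∧
        ∀ Y : Set (Fin n × Fin 3 → ℝ), Y ⊆ P →
          (∀ x ∈ Y, ∀ y ∈ Y, Compat x y) → ¬ X ⊂ Y := by
  constructor
  · rintro ⟨hX, hmax⟩
    refine ⟨adm_compat hconv horth hX, fun Y hY hYc hXY => ?_⟩
    exact hmax _ (hullFace_adm horth hYc) (hXY.trans_subset (subset_hullFace hY))
  · rintro ⟨hc, hmax⟩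
    have heq : X = hullFace P X := by
      by_contra hne
      exact hmax (hullFace P X) (fun y hy => hy.1) (hullFace_compat hc)
        ((subset_hullFace hXP).ssubset_of_ne hne)
    refine ⟨?_, fun G hG => hmax G hG.1.subset (adm_compat hconv horth hG)⟩
    rw [heq]
    exact hullFace_adm horth hc
end

section
/- Let V be a linear subspace of ℝ^{3n} of dimension at most 2n that contains all the tetrahedral solutions t¹, …, tⁿ, and let C = V ∩ (non-negative orthant). Then for each d ∈ {0, 1, …, n−1}, the number of maximal pairwise-compatible subsets of C whose linear span has dimension exactly d + 1 is at most 3^{n−1−d}; here a maximal pairwise-compatible subset of C is a subset of C consisting of pairwise compatible points that is not strictly contained in any other such subset of C. -/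
/-- The `k`th tetrahedral solution `t^k ∈ ℝ^{3n}`: the vector whose three
coordinates in tetrahedron `k` are `1` and whose other coordinates are `0`. -/
def tetSol {n : ℕ} (k : Fin n) : Fin n × Fin 3 → ℝ := fun p => if p.1 = k then 1 else 0

/-- `F` is a *maximal pairwise-compatible subset* of `C`: a subset of `C`
consisting of pairwise compatible points that is not strictly contained in any
other such subset of `C`. -/
def MaxCompatSubset {n : ℕ} (C F : Set (Fin n × Fin 3 → ℝ)) : Prop :=
  F ⊆ C ∧ (∀ x ∈ F, ∀ y ∈ F, Compat x y) ∧
    ∀ G : Set (Fin n × Fin 3 → ℝ), G ⊆ C → (∀ x ∈ G, ∀ y ∈ G, Compat x y) → ¬ F ⊂ G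

def subU {n : ℕ} (U : Submodule ℝ (Fin n × Fin 3 → ℝ)) (k : Fin n) (j : Fin 3) :
    Submodule ℝ (Fin n × Fin 3 → ℝ) where
  carrier := {x | x ∈ U ∧ ∀ j', j' ≠ j → x (k, j') = 0}
  add_mem' := by
    rintro a b ⟨ha, ha'⟩ ⟨hb, hb'⟩
    exact ⟨U.add_mem ha hb, fun j' h => by simp [ha' j' h, hb' j' h]⟩
  zero_mem' := ⟨U.zero_mem, fun _ _ => rfl⟩
  smul_mem' := by
    rintro c a ⟨ha, ha'⟩
    exact ⟨U.smul_mem c ha, fun j' h => by simp [ha' j' h]⟩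

theorem mem_subU {n : ℕ} {U : Submodule ℝ (Fin n × Fin 3 → ℝ)} {k : Fin n} {j : Fin 3}
    {x : Fin n × Fin 3 → ℝ} : x ∈ subU U k j ↔ x ∈ U ∧ ∀ j', j' ≠ j → x (k, j') = 0 := Iff.rfl

theorem subU_le {n : ℕ} (U : Submodule ℝ (Fin n × Fin 3 → ℝ)) (k : Fin n) (j : Fin 3) :
    subU U k j ≤ U := fun _ h => h.1

theorem tet_not_mem {n : ℕ} (U : Submodule ℝ (Fin n × Fin 3 → ℝ)) (k : Fin n) (j : Fin 3) :
    tetSol k ∉ subU U k j := by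
  intro h
  have h1 := h.2 (j + 1) (by fin_cases j <;> decide)
  simp [tetSol] at h1

theorem tet_mem {n : ℕ} {U : Submodule ℝ (Fin n × Fin 3 → ℝ)} {k l : Fin n} (j : Fin 3)
    (hkl : k ≠ l) (h : tetSol l ∈ U) : tetSol l ∈ subU U k j :=
  ⟨h, fun j' _ => by simp [tetSol, hkl]⟩

theorem finrank_subU_lt {n : ℕ} {U : Submodule ℝ (Fin n × Fin 3 → ℝ)} {k : Fin n} (j : Fin 3)
    (h : tetSol k ∈ U) : Module.finrank ℝ (subU U k j) < Module.finrank ℝ U :=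
  Submodule.finrank_lt_finrank_of_lt
    (lt_of_le_of_ne (subU_le U k j) fun e => tet_not_mem U k j (e.symm.le h))

theorem subU_le_of_big {n : ℕ} {U : Submodule ℝ (Fin n × Fin 3 → ℝ)} {k : Fin n} {j : Fin 3}
    (h : tetSol k ∈ U) (hb : Module.finrank ℝ U ≤ Module.finrank ℝ (subU U k j) + 1)
    (j' : Fin 3) : subU U k j' ≤ subU U k j := by
  intro x hx
  have hle : subU U k j ⊔ Submodule.span ℝ {tetSol k} ≤ U :=
    sup_le (subU_le U k j) (by simpa [Submodule.span_le] using h)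
  have hlt : subU U k j < subU U k j ⊔ Submodule.span ℝ {tetSol k} := by
    refine lt_of_le_of_ne le_sup_left fun e => tet_not_mem U k j ?_
    rw [e]
    exact Submodule.mem_sup_right (Submodule.mem_span_singleton_self _)
  have h2 := Submodule.finrank_lt_finrank_of_lt hlt
  have he := Submodule.eq_of_le_of_finrank_le hle (by omega)
  have hxU := hx.1
  rw [← he] at hxU
  obtain ⟨y, hy, z, hz, rfl⟩ := Submodule.mem_sup.1 hxU
  obtain ⟨c, rfl⟩ := Submodule.mem_span_singleton.1 hz
  by_cases hj : j' = j
  · subst hj; exact hx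
  · obtain ⟨l, hl, hl'⟩ : ∃ l : Fin 3, l ≠ j ∧ l ≠ j' :=
      (by decide : ∀ a b : Fin 3, ∃ l : Fin 3, l ≠ a ∧ l ≠ b) j j'
    have h3 := hx.2 l hl'
    have h4 := hy.2 l hl
    have hc : c = 0 := by simpa [tetSol, h4] using h3
    simpa [hc] using hy

theorem exists_branch {n : ℕ} {U : Submodule ℝ (Fin n × Fin 3 → ℝ)}
    {F : Set (Fin n × Fin 3 → ℝ)} (hF : MaxCompatSubset (↑U ∩ Orthant n) F) (k : Fin n) :
    ∃ j, F ⊆ (subU U k j : Set _) := by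
  by_cases h : ∃ x ∈ F, ∃ j, x (k, j) ≠ 0
  · obtain ⟨x, hx, j, hj⟩ := h
    refine ⟨j, fun y hy => ⟨(hF.1 hy).1, fun j' hj' => ?_⟩⟩
    by_contra hne
    exact hj' (hF.2.1 x hx y hy k j' j (Or.inr hne) (Or.inl hj))
  · push Not at h
    exact ⟨0, fun y hy => ⟨(hF.1 hy).1, fun j' _ => h y hy j'⟩⟩

theorem max_restrict {n : ℕ} {U W : Submodule ℝ (Fin n × Fin 3 → ℝ)} (hW : W ≤ U)
    {F : Set (Fin n × Fin 3 → ℝ)} (hF : MaxCompatSubset (↑U ∩ Orthant n) F)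
    (h : F ⊆ (W : Set _)) : MaxCompatSubset (↑W ∩ Orthant n) F :=
  ⟨fun x hx => ⟨h hx, (hF.1 hx).2⟩, hF.2.1,
    fun G hG hc => hF.2.2 G (fun x hx => ⟨hW (hG hx).1, (hG hx).2⟩) hc⟩

def famS {n : ℕ} (U : Submodule ℝ (Fin n × Fin 3 → ℝ)) (D : ℕ) :
    Set (Set (Fin n × Fin 3 → ℝ)) :=
  {F | MaxCompatSubset (↑U ∩ Orthant n) F ∧ Module.finrank ℝ (Submodule.span ℝ F) = D}

theorem famS_empty {n : ℕ} (D : ℕ) (K : Finset (Fin n)) :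
    ∀ U : Submodule ℝ (Fin n × Fin 3 → ℝ), (∀ k ∈ K, tetSol k ∈ U) →
      Module.finrank ℝ U < D + K.card → famS U D = ∅ := by
  induction K using Finset.induction_on with
  | empty =>
    intro U _ h
    refine Set.eq_empty_of_forall_notMem fun F hF => ?_
    have hle : Submodule.span ℝ F ≤ U := Submodule.span_le.2 fun x hx => (hF.1.1 hx).1
    have h1 := Submodule.finrank_mono hle
    have h2 := hF.2
    simp at h
    omega
  | insert k K hk ih =>
    intro U ht h
    refine Set.eq_empty_of_forall_notMem fun F hF => ?_
    obtain ⟨j, hj⟩ := exists_branch hF.1 k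
    have h1 := finrank_subU_lt j (ht k (by simp))
    rw [Finset.card_insert_of_notMem hk] at h
    have h2 := ih (subU U k j)
      (fun l hl => tet_mem j (by rintro rfl; exact hk hl) (ht l (by simp [hl]))) (by omega)
    have h3 : F ∈ famS (subU U k j) D := ⟨max_restrict (subU_le U k j) hF.1 hj, hF.2⟩
    rw [h2] at h3
    exact h3

theorem famS_main {n : ℕ} (D : ℕ) (K : Finset (Fin n)) :
    ∀ (U : Submodule ℝ (Fin n × Fin 3 → ℝ)) (m : ℕ), (∀ k ∈ K, tetSol k ∈ U) →
      (∀ k ∉ K, ∃ j, ∀ x ∈ U, ∀ j', j' ≠ j → x (k, j') = 0) →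
      Module.finrank ℝ U ≤ D + K.card + m →
      (famS U D).Finite ∧ (famS U D).ncard ≤ 3 ^ m := by
  induction K using Finset.induction_on with
  | empty =>
    intro U m _ hc _
    have hsub : famS U D ⊆ {(↑U ∩ Orthant n)} := by
      rintro F ⟨hF, -⟩
      by_contra hne
      refine hF.2.2 (↑U ∩ Orthant n) subset_rfl ?_ (lt_of_le_of_ne hF.1 hne)
      intro x hx y hy i
      obtain ⟨j, hj⟩ := hc i (by simp)
      have key : ∀ a, (x (i, a) ≠ 0 ∨ y (i, a) ≠ 0) → a = j := by
        intro a ha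
        by_contra hne
        rcases ha with ha | ha
        · exact ha (hj x hx.1 a hne)
        · exact ha (hj y hy.1 a hne)
      intro a b ha hb
      rw [key a ha, key b hb]
    refine ⟨(Set.finite_singleton _).subset hsub, ?_⟩
    calc _ ≤ _ := Set.ncard_le_ncard hsub (Set.finite_singleton _)
      _ = 1 := Set.ncard_singleton _
      _ ≤ 3 ^ m := Nat.one_le_pow _ _ (by norm_num)
  | insert k K hk ih =>
    intro U m ht hc hU
    rw [Finset.card_insert_of_notMem hk] at hU
    have hkU := ht k (by simp)
    have ht' : ∀ j, ∀ l ∈ K, tetSol l ∈ subU U k j :=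
      fun j l hl => tet_mem j (by rintro rfl; exact hk hl) (ht l (by simp [hl]))
    have hc' : ∀ j, ∀ l ∉ K, ∃ i, ∀ x ∈ subU U k j, ∀ j', j' ≠ i → x (l, j') = 0 := by
      intro j l hl
      by_cases hlk : l = k
      · subst hlk; exact ⟨j, fun x hx => hx.2⟩
      · obtain ⟨i, hi⟩ := hc l (by simp [hl, hlk])
        exact ⟨i, fun x hx => hi x hx.1⟩
    by_cases hbig : ∃ j, Module.finrank ℝ U ≤ Module.finrank ℝ (subU U k j) + 1
    · obtain ⟨j, hj⟩ := hbig
      have hlt := finrank_subU_lt j hkU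
      obtain ⟨hf, hn⟩ := ih (subU U k j) m (ht' j) (hc' j) (by omega)
      have hsub : famS U D ⊆ famS (subU U k j) D := by
        rintro F ⟨hF, hF'⟩
        obtain ⟨j', hj'⟩ := exists_branch hF k
        exact ⟨max_restrict (subU_le U k j) hF
          fun x hx => subU_le_of_big hkU hj j' (hj' hx), hF'⟩
      exact ⟨hf.subset hsub, (Set.ncard_le_ncard hsub hf).trans hn⟩
    · push Not at hbig
      have hsub : famS U D ⊆ famS (subU U k 0) D ∪ famS (subU U k 1) D ∪ famS (subU U k 2) D := by
        rintro F ⟨hF, hF'⟩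
        obtain ⟨j, hj⟩ := exists_branch hF k
        have : F ∈ famS (subU U k j) D := ⟨max_restrict (subU_le U k j) hF hj, hF'⟩
        fin_cases j
        · exact Or.inl (Or.inl this)
        · exact Or.inl (Or.inr this)
        · exact Or.inr this
      cases m with
      | zero =>
        have he : ∀ j, famS (subU U k j) D = ∅ := fun j =>
          famS_empty D K _ (ht' j) (by have := hbig j; omega)
        simp only [he, Set.union_empty] at hsub
        rw [Set.subset_empty_iff.1 hsub]
        simp
      | succ m =>
        have hh := fun j => ih (subU U k j) m (ht' j) (hc' j) (by have := hbig j; omega)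
        have hf := ((hh 0).1.union (hh 1).1).union (hh 2).1
        refine ⟨hf.subset hsub, (Set.ncard_le_ncard hsub hf).trans ?_⟩
        have h1 := Set.ncard_union_le (famS (subU U k 0) D ∪ famS (subU U k 1) D)
          (famS (subU U k 2) D)
        have h2 := Set.ncard_union_le (famS (subU U k 0) D) (famS (subU U k 1) D)
        have h30 := (hh 0).2
        have h31 := (hh 1).2
        have h32 := (hh 2).2
        rw [pow_succ]
        omega

theorem stmt_16 {n : ℕ} (hn : 1 ≤ n) (V : Submodule ℝ (Fin n × Fin 3 → ℝ))
    (hdim : Module.finrank ℝ V ≤ 2 * n) (htet : ∀ k : Fin n, tetSol k ∈ V)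
    (d : ℕ) (hd : d < n) :
    {F : Set (Fin n × Fin 3 → ℝ) |
        MaxCompatSubset (↑V ∩ Orthant n) F ∧
          Module.finrank ℝ (Submodule.span ℝ F) = d + 1}.Finite ∧
    {F : Set (Fin n × Fin 3 → ℝ) |
        MaxCompatSubset (↑V ∩ Orthant n) F ∧
          Module.finrank ℝ (Submodule.span ℝ F) = d + 1}.ncard ≤ 3 ^ (n - 1 - d) := by
  exact famS_main (d + 1) Finset.univ V (n - 1 - d) (fun k _ => htet k)
    (fun k hk => absurd (Finset.mem_univ k) hk) (by simp; omega)
end
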